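/- There exist a sufficiently small constant c_γ > 0 and a constant k_0 such that for all integers k ≥ k_0 and all margins 0 < γ_i ≤ c_γ the following monotonicity holds: for unit vectors w_1, x_1, w_2, x_2 ∈ ℝ^m and labels y_1, y_2 ∈ {−1,1} with 0 < y_1⟨w_1,x_1⟩ ≤ y_2⟨w_2,x_2⟩ ≤ γ_i, one has Pr_{A,t}[ y_2⟨h_{A,t}(w_2), A x_2⟩ ≤ γ_i/2 ] ≤ Pr_{A,t}[ y_1⟨h_{A,t}(w_1), A x_1⟩ ≤ γ_i/2 ]. -/

import Mathlib

open MeasureTheory ProbabilityTheory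

noncomputable section

/-- Dot product on `Fin m → ℝ`. -/
def dotp {m : ℕ} (w x : Fin m → ℝ) : ℝ := ∑ j, w j * x j

/-- Margin loss `L_D^γ(w)` of `w` under a distribution `D` on `ℝ^m × ℝ`
(labels are encoded as reals in `{-1,1}`). -/
def lossD {m : ℕ} (D : Measure ((Fin m → ℝ) × ℝ)) (γ : ℝ) (w : Fin m → ℝ) : ℝ :=
  (D {p | p.2 * dotp w p.1 ≤ γ}).toReal

/-- Empirical margin loss `L_S^γ(w)` on a training set `S` of `n` labeled points. -/
def lossS {m n : ℕ} (S : Fin n → (Fin m → ℝ) × ℝ) (γ : ℝ) (w : Fin m → ℝ) : ℝ :=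
  (Nat.card {i : Fin n // (S i).2 * dotp w (S i).1 ≤ γ} : ℝ) / n

/-- The i.i.d. sample measure `D^n` over training sets of size `n`. -/
def trainM {m : ℕ} (D : Measure ((Fin m → ℝ) × ℝ)) (n : ℕ) :
    Measure (Fin n → (Fin m → ℝ) × ℝ) := Measure.pi fun _ => D

/-- Spacing of the rounding grid: `(10 √k)⁻¹`. -/
def gridStep (k : ℕ) : ℝ := (10 * Real.sqrt k)⁻¹

/-- The largest grid point `(1/2)(10√k)⁻¹ + z(10√k)⁻¹ ≤ g`. -/
def roundDown (k : ℕ) (g : ℝ) : ℝ :=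
  gridStep k / 2 + (⌊(g - gridStep k / 2) / gridStep k⌋ : ℝ) * gridStep k

/-- The probability `p(z)` of rounding `g` down, chosen so the rounding is unbiased. -/
def roundProb (k : ℕ) (g : ℝ) : ℝ := 1 - (g - roundDown k g) / gridStep k

/-- Matrix-vector product, `(Aw)_i = ∑ j A i j * w j`. -/
def matVec {k m : ℕ} (A : Fin k → Fin m → ℝ) (w : Fin m → ℝ) : Fin k → ℝ :=
  fun i => ∑ j, A i j * w j

/-- The randomized rounding `h_{A,t}(w)` of `Aw` to the grid. -/
def hRound {k m : ℕ} (A : Fin k → Fin m → ℝ) (t : Fin k → ℝ) (w : Fin m → ℝ) :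
    Fin k → ℝ :=
  fun i => if t i ≤ roundProb k (matVec A w i)
    then roundDown k (matVec A w i)
    else roundDown k (matVec A w i) + gridStep k

/-- The joint law of `(A, t)`: `A` has i.i.d. `N(0,1/k)` entries and `t` has i.i.d.
uniform `[0,1]` coordinates, independent of `A`. -/
def roundMeasure (k m : ℕ) : Measure ((Fin k → Fin m → ℝ) × (Fin k → ℝ)) :=
  (Measure.pi fun _ : Fin k => Measure.pi fun _ : Fin m =>
      gaussianReal 0 (k : NNReal)⁻¹).prod
    (Measure.pi fun _ : Fin k => volume.restrict (Set.Icc (0 : ℝ) 1))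

/-- Reduced setup: the data domain `X ⊆ S^d ⊂ ℝ^{d+1}` of unit vectors whose first
`d` coordinates have norm at most `cγ`. -/
def Xset (d : ℕ) (cγ : ℝ) : Set (Fin (d+1) → ℝ) :=
  {x | (∑ j, x j ^ 2) = 1 ∧ (∑ j : Fin d, x j.castSucc ^ 2) ≤ cγ ^ 2}

/-- Reduced setup: the hypothesis class `H = S^{d-1} × {0} ⊂ ℝ^{d+1}`. -/
def Hset (d : ℕ) : Set (Fin (d+1) → ℝ) :=
  {w | (∑ j, w j ^ 2) = 1 ∧ w (Fin.last d) = 0}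

/-- `γ_i = 2^{i-1} n^{-1/2}`. -/
def γlo (n i : ℕ) : ℝ := 2 ^ (i - 1) / Real.sqrt n

/-- `γ_{i+1} = 2^i n^{-1/2}`. -/
def γhi (n i : ℕ) : ℝ := 2 ^ i / Real.sqrt n

/-- `ℓ_{j+1} = 2^j n^{-1}`. -/
def ellhi (n j : ℕ) : ℝ := 2 ^ j / n

/-- The interval `L_j`: `L_0 = [0, n⁻¹]`, and `L_j = (2^{j-1}/n, 2^j/n]` for `j ≥ 1`. -/
def Lset (n j : ℕ) : Set ℝ :=
  if j = 0 then Set.Icc 0 (n : ℝ)⁻¹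
  else Set.Ioc ((2 : ℝ) ^ (j - 1) / n) ((2 : ℝ) ^ j / n)

/-- Margin loss of `h ∈ ℝ^k` under the pushforward distribution `A·D`. -/
def kLossD {k m : ℕ} (D : Measure ((Fin m → ℝ) × ℝ)) (γ : ℝ) (h : Fin k → ℝ)
    (A : Fin k → Fin m → ℝ) : ℝ :=
  (D {q | q.2 * (∑ r, h r * ∑ s, A r s * q.1 s) ≤ γ}).toReal

/-- Empirical margin loss of `h ∈ ℝ^k` on the transformed training set `A·S`. -/
def kLossS {k m n : ℕ} (S : Fin n → (Fin m → ℝ) × ℝ) (γ : ℝ) (h : Fin k → ℝ)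
    (A : Fin k → Fin m → ℝ) : ℝ :=
  (Nat.card {i : Fin n // (S i).2 * (∑ r, h r * ∑ s, A r s * (S i).1 s) ≤ γ} : ℝ) / n

/-- Specification of the function `φ` from the paper, for margin parameter `γi`:
on `[-cγ, 0]` it equals the probability (over the randomized rounding) that the rounded
margin exceeds `γi/2` given original margin `α`; on `(0, γi]` it interpolates linearly to
`0`; on `(γi, cγ]` it is `0`. -/
def phiSpec (d k : ℕ) (cγ γi : ℝ) (φ : ℝ → ℝ) : Prop :=
  (∀ (w x : Fin (d+1) → ℝ) (y : ℝ), w ∈ Hset d → x ∈ Xset d cγ →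
      (y = 1 ∨ y = -1) → y * dotp w x ≤ 0 →
      φ (y * dotp w x) =
        (roundMeasure k (d+1)
          {p | γi / 2 < y * ∑ r, hRound p.1 p.2 w r * ∑ s, p.1 r s * x s}).toReal) ∧
  (∀ α : ℝ, 0 < α → α ≤ γi → φ α = ((γi - α) / γi) * φ 0) ∧
  (∀ α : ℝ, γi < α → α ≤ cγ → φ α = 0)

/-- Specification of the function `ρ` from the paper, for margin parameter `γi`. -/
def rhoSpec (d k : ℕ) (cγ γi : ℝ) (ρ : ℝ → ℝ) : Prop :=
  (∀ (w x : Fin (d+1) → ℝ) (y : ℝ), w ∈ Hset d → x ∈ Xset d cγ →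
      (y = 1 ∨ y = -1) → γi < y * dotp w x →
      ρ (y * dotp w x) =
        (roundMeasure k (d+1)
          {p | y * ∑ r, hRound p.1 p.2 w r * ∑ s, p.1 r s * x s ≤ γi / 2}).toReal) ∧
  (∀ α : ℝ, 0 < α → α ≤ γi →
      ∀ (w x : Fin (d+1) → ℝ) (y : ℝ), w ∈ Hset d → x ∈ Xset d cγ →
      (y = 1 ∨ y = -1) → y * dotp w x = γi →
      ρ α = (α / γi) *
        (roundMeasure k (d+1)
          {p | y * ∑ r, hRound p.1 p.2 w r * ∑ s, p.1 r s * x s ≤ γi / 2}).toReal) ∧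
  (∀ α : ℝ, -cγ ≤ α → α ≤ 0 → ρ α = 0)

/-!
Fix the thresholds `t` and write `a = Aw`. Splitting `x = α w + √(1 - α²) z` with `z` a unit vector
orthogonal to `w`, the vector `Az` is independent of `a`, so the rounded margin is conditionally
Gaussian and is at most `γ/2` with probability `Φ(T(α))`, where `h` is the rounding of `a` and
`T(α) = √k (γ/2 √(1 + s²) - s ⟨h, a⟩) / ‖h‖` for the slope `s = α / √(1 - α²)`. The probability
thus depends on `w`, `x` and the label only through the margin `α`.

The rounding error has norm at most `1/10`, so `⟨h, a⟩` is close to `‖a‖²` and `T` decreases in `α`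
unless `‖a‖² ≤ 1/4`. On this exceptional ball, whose probability is at most `(3/4)^k`, increasing
the slope by `δ` costs at most `2 √k δ`, since `‖h‖ ≥ 1/20` and `Φ` is Lipschitz. On the shell
`1/4 < ‖a‖² < 4`, which carries at least half of the mass, `|T| ≤ √k/10` keeps the density of `Φ`
above `exp(-k/200)/3` and the gain is at least `√k δ exp(-k/200)/100`. The gain outweighs the loss
because `3/4 < exp(-1/200)`.
-/

open scoped Matrix NNReal ENNReal

local notation "Φ" => cdf (gaussianReal 0 1)

section GaussianVector

variable {ι : Type*} [Fintype ι] (v : ℝ≥0)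

theorem hasGaussianLaw_dotProduct_dotProduct (c d : ι → ℝ) :
    HasGaussianLaw (fun a : ι → ℝ => (c ⬝ᵥ a, d ⬝ᵥ a))
      (Measure.pi fun _ : ι => gaussianReal 0 v) := by
  have hid : HasGaussianLaw (fun a i => a i) (Measure.pi fun _ : ι => gaussianReal 0 v) := by
    refine iIndepFun.hasGaussianLaw (fun i => ?_) (iIndepFun_pi fun _ => aemeasurable_id')
    exact ⟨by rw [(measurePreserving_eval _ i).map_eq]; infer_instance⟩
  let L : (ι → ℝ) →L[ℝ] ℝ × ℝ := LinearMap.toContinuousLinearMap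
    ((dotProductBilin ℝ ℝ c).prod (dotProductBilin ℝ ℝ d))
  exact hid.map_fun L

theorem memLp_eval_pi_gaussianReal (i : ι) :
    MemLp (fun a : ι → ℝ => a i) 2 (Measure.pi fun _ : ι => gaussianReal 0 v) :=
  (memLp_id_gaussianReal 2).comp_measurePreserving (measurePreserving_eval _ i)

theorem integral_dotProduct_pi_gaussianReal (c : ι → ℝ) :
    ∫ a, c ⬝ᵥ a ∂(Measure.pi fun _ : ι => gaussianReal 0 v) = 0 := by
  simp only [dotProduct]
  rw [integral_finsetSum _ fun i _ =>
    ((memLp_eval_pi_gaussianReal v i).integrable one_le_two).const_mul _]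
  simp only [integral_const_mul, integral_eval, integral_id_gaussianReal, mul_zero,
    Finset.sum_const_zero]

theorem covariance_eval_pi_gaussianReal [DecidableEq ι] (i j : ι) :
    cov[fun a => a i, fun a => a j; Measure.pi fun _ : ι => gaussianReal 0 v] =
      if i = j then (v : ℝ) else 0 := by
  split_ifs with hij
  · subst hij
    have hmp := measurePreserving_eval (fun _ : ι => gaussianReal 0 v) i
    rw [covariance_self hmp.aemeasurable]
    exact (hmp.variance_fun_comp aemeasurable_id).trans variance_id_gaussianReal
  · have hindep := (iIndepFun_pi (μ := fun _ : ι => gaussianReal 0 v)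
      fun _ => aemeasurable_id').indepFun hij
    exact hindep.covariance_eq_zero (memLp_eval_pi_gaussianReal v i)
      (memLp_eval_pi_gaussianReal v j)

theorem covariance_dotProduct_pi_gaussianReal (c d : ι → ℝ) :
    cov[fun a => c ⬝ᵥ a, fun a => d ⬝ᵥ a; Measure.pi fun _ : ι => gaussianReal 0 v] =
      v * (c ⬝ᵥ d) := by
  classical
  simp only [dotProduct]
  rw [covariance_fun_sum_fun_sum (fun i => (memLp_eval_pi_gaussianReal v i).const_mul _)
    (fun i => (memLp_eval_pi_gaussianReal v i).const_mul _)]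
  simp only [covariance_const_mul_left, covariance_const_mul_right,
    covariance_eval_pi_gaussianReal, mul_ite, mul_zero, Finset.sum_ite_eq, Finset.mem_univ,
    if_true, Finset.mul_sum]
  exact Finset.sum_congr rfl fun i _ => by ring

theorem map_dotProduct_pi_gaussianReal (c : ι → ℝ) :
    (Measure.pi fun _ : ι => gaussianReal 0 v).map (fun a => c ⬝ᵥ a) =
      gaussianReal 0 (v * (c ⬝ᵥ c).toNNReal) := by
  rw [(hasGaussianLaw_dotProduct_dotProduct v c c).fst.map_eq_gaussianReal,
    integral_dotProduct_pi_gaussianReal, ← covariance_self (by fun_prop),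
    covariance_dotProduct_pi_gaussianReal, Real.toNNReal_mul v.coe_nonneg, Real.toNNReal_coe]

theorem map_dotProduct_dotProduct_pi_gaussianReal {w z : ι → ℝ} (hw : w ⬝ᵥ w = 1)
    (hz : z ⬝ᵥ z = 1) (hwz : w ⬝ᵥ z = 0) :
    (Measure.pi fun _ : ι => gaussianReal 0 v).map (fun a => (w ⬝ᵥ a, z ⬝ᵥ a)) =
      (gaussianReal 0 v).prod (gaussianReal 0 v) := by
  have hindep := (hasGaussianLaw_dotProduct_dotProduct v w z).indepFun_of_covariance_eq_zero
    (by rw [covariance_dotProduct_pi_gaussianReal, hwz, mul_zero])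
  rw [(indepFun_iff_map_prod_eq_prod_map_map (by fun_prop) (by fun_prop)).1 hindep]
  simp only [map_dotProduct_pi_gaussianReal, hw, hz, Real.toNNReal_one, mul_one]

theorem map_matVec_matVec_pi_gaussianReal (k : ℕ) {m : ℕ} {w z : Fin m → ℝ}
    (hw : w ⬝ᵥ w = 1) (hz : z ⬝ᵥ z = 1) (hwz : w ⬝ᵥ z = 0) :
    (Measure.pi fun _ : Fin k => Measure.pi fun _ : Fin m => gaussianReal 0 v).map
        (fun A => (matVec A w, matVec A z)) =
      (Measure.pi fun _ : Fin k => gaussianReal 0 v).prod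
        (Measure.pi fun _ : Fin k => gaussianReal 0 v) := by
  have hrow : Measurable fun a : Fin m → ℝ => (w ⬝ᵥ a, z ⬝ᵥ a) := by fun_prop
  have := Measure.isProbabilityMeasure_map
    (μ := Measure.pi fun _ : Fin m => gaussianReal 0 v) hrow.aemeasurable
  have hrows := Measure.pi_map_pi (ι := Fin k)
    (μ := fun _ => Measure.pi fun _ : Fin m => gaussianReal 0 v) fun _ => hrow.aemeasurable
  have hsplit := measurePreserving_arrowProdEquivProdArrow ℝ ℝ (Fin k)
    (fun _ => gaussianReal 0 v) (fun _ => gaussianReal 0 v)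
  simp only [map_dotProduct_dotProduct_pi_gaussianReal v hw hz hwz] at hrows
  rw [← hsplit.map_eq, ← hrows, Measure.map_map hsplit.measurable (by fun_prop)]
  simp only [dotProduct_comm w, dotProduct_comm z]
  rfl

end GaussianVector

section GaussianCDF

theorem hasDerivAt_cdf_gaussianReal (μ : ℝ) {v : ℝ≥0} (hv : v ≠ 0) (x : ℝ) :
    HasDerivAt (cdf (gaussianReal μ v)) (gaussianPDFReal μ v x) x := by
  have hcdf (y : ℝ) : cdf (gaussianReal μ v) y = ∫ u in Set.Iic y, gaussianPDFReal μ v u := by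
    rw [cdf_eq_real, measureReal_def, gaussianReal_apply_eq_integral μ hv,
      ENNReal.toReal_ofReal (integral_nonneg (gaussianPDFReal_nonneg μ v))]
  have hint (y : ℝ) : IntegrableOn (gaussianPDFReal μ v) (Set.Iic y) :=
    (integrable_gaussianPDFReal μ v).integrableOn
  have hsplit : ⇑(cdf (gaussianReal μ v)) =
      fun y => cdf (gaussianReal μ v) 0 + ∫ u in (0 : ℝ)..y, gaussianPDFReal μ v u := by
    ext y
    rw [← intervalIntegral.integral_Iic_sub_Iic (hint 0) (hint y), hcdf, hcdf]
    ring
  have hcont : Continuous (gaussianPDFReal μ v) := by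
    rw [gaussianPDFReal_def]
    fun_prop
  rw [hsplit]
  exact (hcont.integral_hasStrictDerivAt 0 x).hasDerivAt.const_add _

theorem gaussianReal_Iic_eq_cdf {v : ℝ≥0} (hv : v ≠ 0) (x : ℝ) :
    gaussianReal 0 v (Set.Iic x) = ENNReal.ofReal (Φ (x / √v)) := by
  have hv' : 0 < √(v : ℝ) := Real.sqrt_pos.2 (by positivity)
  have hstd : (gaussianReal 0 v).map (fun y => y / √v) = gaussianReal 0 1 := by
    rw [gaussianReal_map_div_const, zero_div]
    congr 1
    ext
    simp [hv]
  rw [ofReal_cdf, ← hstd, Measure.map_apply (by fun_prop) measurableSet_Iic]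
  congr 1
  ext y
  simp [div_le_div_iff_of_pos_right hv']

theorem gaussianPDFReal_zero_one (x : ℝ) :
    gaussianPDFReal 0 1 x = (√(2 * Real.pi))⁻¹ * Real.exp (-x ^ 2 / 2) := by
  simp [gaussianPDFReal]

theorem lipschitzWith_cdf_gaussianReal : LipschitzWith 1 Φ := by
  refine lipschitzWith_of_nnnorm_deriv_le
    (fun x => (hasDerivAt_cdf_gaussianReal 0 one_ne_zero x).differentiableAt) fun x => ?_
  rw [(hasDerivAt_cdf_gaussianReal 0 one_ne_zero x).deriv, ← NNReal.coe_le_coe, coe_nnnorm,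
    Real.norm_of_nonneg (gaussianPDFReal_nonneg _ _ _), gaussianPDFReal_zero_one]
  have hsqrt : 1 ≤ √(2 * Real.pi) := Real.one_le_sqrt.2 (by linarith [Real.pi_gt_three])
  have hexp : Real.exp (-x ^ 2 / 2) ≤ 1 := Real.exp_le_one_iff.2 (by linarith [sq_nonneg x])
  exact mul_le_one₀ (inv_le_one_of_one_le₀ hsqrt) (Real.exp_nonneg _) hexp

theorem neg_le_cdf_gaussianReal_sub {c x y : ℝ} (hc : 0 ≤ c) (h : -c ≤ y - x) :
    -c ≤ Φ y - Φ x := by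
  rcases le_total x y with hxy | hyx
  · linarith [monotone_cdf (gaussianReal 0 1) hxy]
  · have hlip := lipschitzWith_cdf_gaussianReal.dist_le_mul y x
    rw [Real.dist_eq, Real.dist_eq, abs_of_nonpos (sub_nonpos.2 hyx), NNReal.coe_one] at hlip
    linarith [neg_abs_le (Φ y - Φ x)]

theorem mul_sub_le_cdf_gaussianReal_sub {M x y : ℝ} (hxy : x ≤ y) (hx : |x| ≤ M) (hy : |y| ≤ M) :
    Real.exp (-M ^ 2 / 2) / 3 * (y - x) ≤ Φ y - Φ x := by
  refine (convex_Icc (-M) M).mul_sub_le_image_sub_of_le_deriv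
    (fun z _ => (hasDerivAt_cdf_gaussianReal 0 one_ne_zero z).continuousAt.continuousWithinAt)
    (fun z _ => (hasDerivAt_cdf_gaussianReal 0 one_ne_zero
      z).differentiableAt.differentiableWithinAt)
    (fun z hz => ?_) x (abs_le.1 hx) y (abs_le.1 hy) hxy
  rw [interior_Icc] at hz
  rw [(hasDerivAt_cdf_gaussianReal 0 one_ne_zero z).deriv, gaussianPDFReal_zero_one,
    div_eq_inv_mul]
  have hsqrt : √(2 * Real.pi) ≤ 3 := by
    rw [Real.sqrt_le_left (by norm_num)]
    linarith [Real.pi_lt_four]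
  have hsq : z ^ 2 ≤ M ^ 2 := sq_le_sq' hz.1.le hz.2.le
  gcongr

end GaussianCDF

section GaussianNorm

theorem mgf_sq_gaussianReal {v : ℝ≥0} {t : ℝ} (ht : 2 * v * t < 1) :
    mgf (fun x => x ^ 2) (gaussianReal 0 v) t = (√(1 - 2 * v * t))⁻¹ := by
  rcases eq_or_ne v 0 with rfl | hv
  · simp [mgf]
  have hdensity (x : ℝ) : gaussianPDFReal 0 v x • Real.exp (t * x ^ 2) =
      (√(2 * Real.pi * v))⁻¹ * Real.exp (-((1 - 2 * v * t) / (2 * v)) * x ^ 2) := by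
    rw [gaussianPDFReal, smul_eq_mul, mul_assoc, ← Real.exp_add]
    congr 2
    field_simp
    ring
  simp only [mgf, integral_gaussianReal_eq_integral_smul hv, hdensity, integral_const_mul,
    integral_gaussian]
  rw [← Real.sqrt_inv, ← Real.sqrt_inv, ← Real.sqrt_mul (by positivity)]
  congr 1
  field_simp

variable {ι : Type*} [Fintype ι] {v : ℝ≥0}

theorem mgf_dotProduct_self_pi_gaussianReal {t : ℝ} (ht : 2 * v * t < 1) :
    mgf (fun a : ι → ℝ => a ⬝ᵥ a) (Measure.pi fun _ => gaussianReal 0 v) t =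
      (√(1 - 2 * v * t))⁻¹ ^ Fintype.card ι := by
  have hsum : (fun a : ι → ℝ => a ⬝ᵥ a) = ∑ i, fun a : ι → ℝ => a i ^ 2 := by
    ext a
    simp [dotProduct, sq]
  have hindep : iIndepFun (fun i (a : ι → ℝ) => a i ^ 2) (Measure.pi fun _ => gaussianReal 0 v) :=
    iIndepFun_pi (X := fun _ x => x ^ 2) fun _ => by fun_prop
  have hmgf (i : ι) : mgf (fun a : ι → ℝ => a i ^ 2) (Measure.pi fun _ => gaussianReal 0 v) t =
      (√(1 - 2 * v * t))⁻¹ := by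
    rw [← mgf_sq_gaussianReal ht]
    exact integral_comp_eval (μ := fun _ : ι => gaussianReal 0 v)
      (f := fun x => Real.exp (t * x ^ 2)) (by fun_prop)
  rw [hsum, hindep.mgf_sum (fun i => by fun_prop)]
  simp only [hmgf, Finset.prod_const, Finset.card_univ]

theorem measureReal_dotProduct_self_le_le_exp_mul {t : ℝ} (ht : t ≤ 0) (ε : ℝ) :
    (Measure.pi fun _ : ι => gaussianReal 0 v).real {a | a ⬝ᵥ a ≤ ε} ≤
      Real.exp (-t * ε) * (√(1 - 2 * v * t))⁻¹ ^ Fintype.card ι := by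
  have hvt : 2 * v * t ≤ 0 := mul_nonpos_of_nonneg_of_nonpos (by positivity) ht
  rw [← mgf_dotProduct_self_pi_gaussianReal (hvt.trans_lt one_pos)]
  refine measure_le_le_exp_mul_mgf ε ht (Integrable.of_bound (C := 1) (by fun_prop) ?_)
  refine ae_of_all _ fun a => ?_
  rw [Real.norm_eq_abs, Real.abs_exp, Real.exp_le_one_iff]
  exact mul_nonpos_of_nonpos_of_nonneg ht (dotProduct_self_star_nonneg a)

theorem measureReal_le_dotProduct_self_le_div {ε : ℝ} (hε : 0 < ε) :
    (Measure.pi fun _ : ι => gaussianReal 0 v).real {a | ε ≤ a ⬝ᵥ a} ≤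
      Fintype.card ι * v / ε := by
  have hint (i : ι) : Integrable (fun a : ι → ℝ => a i * a i)
      (Measure.pi fun _ => gaussianReal 0 v) :=
    (memLp_eval_pi_gaussianReal v i).integrable_mul (memLp_eval_pi_gaussianReal v i)
  have hsecond (i : ι) : ∫ a : ι → ℝ, a i * a i ∂(Measure.pi fun _ => gaussianReal 0 v) = v := by
    classical
    have hcov := covariance_eq_sub (memLp_eval_pi_gaussianReal v i)
      (memLp_eval_pi_gaussianReal v i)
    rw [covariance_eval_pi_gaussianReal, if_pos rfl, integral_eval, integral_id_gaussianReal,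
      mul_zero, sub_zero] at hcov
    exact hcov.symm
  have hmean : ∫ a : ι → ℝ, a ⬝ᵥ a ∂(Measure.pi fun _ => gaussianReal 0 v) =
      Fintype.card ι * v := by
    simp only [dotProduct, integral_finsetSum _ fun i _ => hint i, hsecond, Finset.sum_const,
      Finset.card_univ, nsmul_eq_mul]
  rw [le_div_iff₀' hε, ← hmean]
  exact mul_meas_ge_le_integral_of_nonneg (ae_of_all _ fun a => dotProduct_self_star_nonneg a)
    (integrable_finsetSum _ fun i _ => hint i) ε

theorem measureReal_dotProduct_self_le_one_quarter_le_pow {k : ℕ} (hk : 0 < k) :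
    (Measure.pi fun _ : Fin k => gaussianReal 0 (k : ℝ≥0)⁻¹).real {a | a ⬝ᵥ a ≤ 1 / 4} ≤
      (3 / 4) ^ k := by
  have hk' : (k : ℝ) ≠ 0 := by positivity
  have hexp : Real.exp (3 / 8) ≤ 3 / 2 := by
    have hpow : Real.exp (3 / 8) ^ 8 = Real.exp 1 ^ 3 := by
      rw [← Real.exp_nat_mul, ← Real.exp_nat_mul]
      norm_num
    refine le_of_pow_le_pow_left₀ (n := 8) (by norm_num) (by norm_num) ?_
    calc Real.exp (3 / 8) ^ 8 = Real.exp 1 ^ 3 := hpow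
      _ ≤ 2.7182818286 ^ 3 := by gcongr; exact Real.exp_one_lt_d9.le
      _ ≤ (3 / 2) ^ 8 := by norm_num
  have hsqrt : (√(1 - 2 * ((k : ℝ≥0)⁻¹ : ℝ≥0) * (-(3 / 2) * k)))⁻¹ = 1 / 2 := by
    rw [show 1 - 2 * (((k : ℝ≥0)⁻¹ : ℝ≥0) : ℝ) * (-(3 / 2) * k) = 2 ^ 2 by
      push_cast; field_simp; norm_num, Real.sqrt_sq zero_le_two, one_div]
  calc _ ≤ Real.exp (-(-(3 / 2) * k) * (1 / 4)) * (1 / 2) ^ k := by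
        simpa only [hsqrt, Fintype.card_fin] using
          measureReal_dotProduct_self_le_le_exp_mul (ι := Fin k) (v := (k : ℝ≥0)⁻¹)
            (t := -(3 / 2) * k) (by simp) (1 / 4)
    _ = Real.exp (3 / 8) ^ k * (1 / 2) ^ k := by
        rw [← Real.exp_nat_mul]
        ring_nf
    _ ≤ (3 / 2) ^ k * (1 / 2) ^ k := by gcongr
    _ = (3 / 4) ^ k := by rw [← mul_pow]; norm_num

theorem four_mul_three_quarters_pow_le_exp {k : ℕ} (hk : 50 ≤ k) :
    4 * (3 / 4 : ℝ) ^ k ≤ Real.exp (-k / 200) / 100 := by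
  have hdecay : (9 / 10 : ℝ) ^ k ≤ Real.exp (-k / 200) := by
    rw [show (-k / 200 : ℝ) = k * (-1 / 200) by ring, Real.exp_nat_mul]
    gcongr
    linarith [Real.add_one_le_exp (-1 / 200 : ℝ)]
  calc 4 * (3 / 4 : ℝ) ^ k = 4 * (5 / 6) ^ k * (9 / 10) ^ k := by
        rw [mul_assoc, ← mul_pow]
        norm_num
    _ ≤ 4 * (5 / 6) ^ 50 * Real.exp (-k / 200) := by
        have hpow : (5 / 6 : ℝ) ^ k ≤ (5 / 6) ^ 50 :=
          pow_le_pow_of_le_one (by norm_num) (by norm_num) hk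
        gcongr
    _ ≤ 1 / 100 * Real.exp (-k / 200) := by gcongr; norm_num
    _ = Real.exp (-k / 200) / 100 := by ring

theorem half_le_measureReal_shell {k : ℕ} (hk : 50 ≤ k) :
    1 / 2 ≤ (Measure.pi fun _ : Fin k => gaussianReal 0 (k : ℝ≥0)⁻¹).real
      {a | 1 / 4 < a ⬝ᵥ a ∧ a ⬝ᵥ a < 4} := by
  set μ := Measure.pi fun _ : Fin k => gaussianReal 0 (k : ℝ≥0)⁻¹
  have hlow : μ.real {a | a ⬝ᵥ a ≤ 1 / 4} ≤ 1 / 400 := by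
    have hexp : Real.exp (-k / 200) ≤ 1 := Real.exp_le_one_iff.2 (by
      linarith [(Nat.cast_nonneg k : (0 : ℝ) ≤ k)])
    linarith [measureReal_dotProduct_self_le_one_quarter_le_pow (k := k) (by omega),
      four_mul_three_quarters_pow_le_exp hk]
  have hhigh : μ.real {a | 4 ≤ a ⬝ᵥ a} ≤ 1 / 4 := by
    have hmarkov := measureReal_le_dotProduct_self_le_div (ι := Fin k) (v := (k : ℝ≥0)⁻¹) four_pos
    rwa [Fintype.card_fin, NNReal.coe_inv, NNReal.coe_natCast,
      mul_inv_cancel₀ (by positivity)] at hmarkov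
  have hcover : {a : Fin k → ℝ | 1 / 4 < a ⬝ᵥ a ∧ a ⬝ᵥ a < 4}ᶜ =
      {a | a ⬝ᵥ a ≤ 1 / 4} ∪ {a | 4 ≤ a ⬝ᵥ a} := by
    ext a
    simp [imp_iff_not_or]
  have hcompl := measureReal_union_le (μ := μ) {a : Fin k → ℝ | a ⬝ᵥ a ≤ 1 / 4} {a | 4 ≤ a ⬝ᵥ a}
  have hmeas : MeasurableSet {a : Fin k → ℝ | 1 / 4 < a ⬝ᵥ a ∧ a ⬝ᵥ a < 4} :=
    measurableSet_Ioo.preimage (by fun_prop : Measurable fun a : Fin k → ℝ => a ⬝ᵥ a)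
  rw [← hcover, probReal_compl_eq_one_sub hmeas] at hcompl
  linarith

end GaussianNorm

section Averaging

theorem mul_measureReal_sub_mul_measureReal_le_integral {Ω : Type*} [MeasurableSpace Ω]
    {μ : Measure Ω} [IsFiniteMeasure μ] {f : Ω → ℝ} {s t : Set Ω} {b c : ℝ}
    (hf : Integrable f μ) (hs : MeasurableSet s) (ht : MeasurableSet t) (hst : Disjoint s t)
    (hfs : ∀ x ∈ s, -b ≤ f x) (hft : ∀ x ∈ t, c ≤ f x) (hf0 : ∀ x ∉ s, 0 ≤ f x) :
    c * μ.real t - b * μ.real s ≤ ∫ x, f x ∂μ := by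
  have hbs : -b * μ.real s ≤ ∫ x in s, f x ∂μ :=
    setIntegral_ge_of_const_le_real hs (measure_ne_top μ s) hfs hf.integrableOn
  have hct : c * μ.real t ≤ ∫ x in t, f x ∂μ :=
    setIntegral_ge_of_const_le_real ht (measure_ne_top μ t) hft hf.integrableOn
  have htsc : ∫ x in t, f x ∂μ ≤ ∫ x in sᶜ, f x ∂μ :=
    setIntegral_mono_set hf.integrableOn
      ((ae_restrict_iff' hs.compl).2 (ae_of_all _ fun x hx => hf0 x hx))
      hst.subset_compl_left.eventuallyLE
  linarith [integral_add_compl hs hf]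

end Averaging

section GridRounding

variable {k : ℕ}

/-- The randomized rounding of a fixed vector `a ∈ ℝ^k` with thresholds `t`, so that
`h_{A,t}(w)` is the rounding of `Aw`. -/
def gridRound (t a : Fin k → ℝ) : Fin k → ℝ :=
  fun i => if t i ≤ roundProb k (a i) then roundDown k (a i) else roundDown k (a i) + gridStep k

theorem gridStep_pos (hk : 0 < k) : 0 < gridStep k := by
  rw [gridStep]
  positivity

theorem mul_gridStep_sq (hk : 0 < k) : k * gridStep k ^ 2 = 1 / 100 := by
  rw [gridStep, inv_pow, mul_pow, Real.sq_sqrt k.cast_nonneg]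
  field_simp
  norm_num

theorem abs_gridRound_sub_le (hk : 0 < k) (t a : Fin k → ℝ) (i : Fin k) :
    |gridRound t a i - a i| ≤ gridStep k := by
  have hσ := gridStep_pos hk
  have hfloor := Int.floor_le ((a i - gridStep k / 2) / gridStep k)
  have hlt := Int.lt_floor_add_one ((a i - gridStep k / 2) / gridStep k)
  rw [le_div_iff₀ hσ] at hfloor
  rw [div_lt_iff₀ hσ] at hlt
  rw [abs_le, gridRound, roundDown]
  split_ifs <;> constructor <;> linarith

theorem gridStep_div_two_le_abs_gridRound (hk : 0 < k) (t a : Fin k → ℝ) (i : Fin k) :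
    gridStep k / 2 ≤ |gridRound t a i| := by
  have hσ := gridStep_pos hk
  have hgrid (z : ℤ) : gridStep k / 2 ≤ |gridStep k / 2 + z * gridStep k| := by
    rcases le_or_gt 0 z with hz | hz
    · have : (0 : ℝ) ≤ z := by exact_mod_cast hz
      exact (le_add_of_nonneg_right (by positivity)).trans (le_abs_self _)
    · have : (z : ℝ) + 1 ≤ 0 := by exact_mod_cast hz
      exact le_trans (by nlinarith) (neg_le_abs _)
  rw [gridRound, roundDown]
  split_ifs
  · exact hgrid _
  · simpa only [Int.cast_add, Int.cast_one, add_mul, one_mul, add_assoc] using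
      hgrid (⌊(a i - gridStep k / 2) / gridStep k⌋ + 1)

theorem measurable_gridRound :
    Measurable fun p : (Fin k → ℝ) × (Fin k → ℝ) => gridRound p.1 p.2 := by
  have hdown : Measurable (roundDown k) :=
    measurable_const.add (((measurable_of_countable fun z : ℤ => (z : ℝ)).comp
      (Int.measurable_floor.comp (by fun_prop))).mul_const _)
  refine measurable_pi_lambda _ fun i => Measurable.ite (measurableSet_le (by fun_prop) ?_)
    (by fun_prop) (by fun_prop)
  unfold roundProb
  fun_prop

theorem gridRound_sub_dotProduct_self_le (hk : 0 < k) (t a : Fin k → ℝ) :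
    (gridRound t a - a) ⬝ᵥ (gridRound t a - a) ≤ 1 / 100 := by
  rw [← mul_gridStep_sq hk]
  calc (gridRound t a - a) ⬝ᵥ (gridRound t a - a) ≤ ∑ _i : Fin k, gridStep k ^ 2 := by
        refine Finset.sum_le_sum fun i _ => ?_
        rw [Pi.sub_apply, ← sq]
        exact sq_le_sq' (abs_le.1 (abs_gridRound_sub_le hk t a i)).1
          (abs_le.1 (abs_gridRound_sub_le hk t a i)).2
    _ = k * gridStep k ^ 2 := by simp

theorem le_gridRound_dotProduct_self (hk : 0 < k) (t a : Fin k → ℝ) :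
    1 / 400 ≤ gridRound t a ⬝ᵥ gridRound t a := by
  calc (1 / 400 : ℝ) = ∑ _i : Fin k, (gridStep k / 2) ^ 2 := by
        rw [Finset.sum_const, Finset.card_univ, Fintype.card_fin, nsmul_eq_mul]
        linarith [mul_gridStep_sq hk]
    _ ≤ gridRound t a ⬝ᵥ gridRound t a := by
        refine Finset.sum_le_sum fun i _ => ?_
        rw [← sq, ← sq_abs (gridRound t a i)]
        have hσ := gridStep_pos hk
        gcongr
        exact gridStep_div_two_le_abs_gridRound hk t a i

theorem gridRound_dotProduct_self_le (hk : 0 < k) (t a : Fin k → ℝ) :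
    gridRound t a ⬝ᵥ gridRound t a ≤ 2 * (a ⬝ᵥ a) + 1 / 50 := by
  have herr := gridRound_sub_dotProduct_self_le hk t a
  have hsq : 0 ≤ (gridRound t a - (2 : ℝ) • a) ⬝ᵥ (gridRound t a - (2 : ℝ) • a) :=
    dotProduct_self_star_nonneg _
  simp only [sub_dotProduct, dotProduct_sub, smul_dotProduct, dotProduct_smul,
    smul_eq_mul, dotProduct_comm a] at herr hsq
  linarith

theorem abs_gridRound_dotProduct_sub_le (hk : 0 < k) (t a : Fin k → ℝ) :
    |gridRound t a ⬝ᵥ a - a ⬝ᵥ a| ≤ (a ⬝ᵥ a) / 20 + 1 / 20 := by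
  set e := gridRound t a - a with he
  have herr : e ⬝ᵥ e ≤ 1 / 100 := gridRound_sub_dotProduct_self_le hk t a
  have hadd : 0 ≤ ((10 : ℝ) • e + a) ⬝ᵥ ((10 : ℝ) • e + a) := dotProduct_self_star_nonneg _
  have hsub : 0 ≤ ((10 : ℝ) • e - a) ⬝ᵥ ((10 : ℝ) • e - a) := dotProduct_self_star_nonneg _
  simp only [sub_dotProduct, dotProduct_sub, add_dotProduct, dotProduct_add, smul_dotProduct,
    dotProduct_smul, smul_eq_mul, dotProduct_comm a] at hadd hsub
  rw [← sub_dotProduct, ← he, abs_le]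
  constructor <;> linarith

end GridRounding

section Threshold

/-- The tangent of the angle whose sine is `α`: the margin `α` enters the conditional
probabilities through this quantity. -/
def marginSlope (α : ℝ) : ℝ := α / √(1 - α ^ 2)

theorem monotoneOn_marginSlope : MonotoneOn marginSlope (Set.Ioo (-1) 1) := by
  intro α hα β hβ hαβ
  rw [marginSlope, marginSlope, ← Real.tan_arcsin, ← Real.tan_arcsin]
  exact Real.strictMonoOn_tan.monotoneOn
    ⟨Real.neg_pi_div_two_lt_arcsin.2 hα.1, Real.arcsin_lt_pi_div_two.2 hα.2⟩
    ⟨Real.neg_pi_div_two_lt_arcsin.2 hβ.1, Real.arcsin_lt_pi_div_two.2 hβ.2⟩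
    (Real.monotone_arcsin hαβ)

theorem marginSlope_sub_nonneg {α β : ℝ} (hα : -1 < α) (hαβ : α ≤ β) (hβ : β < 1) :
    0 ≤ marginSlope β - marginSlope α :=
  sub_nonneg.2 (monotoneOn_marginSlope ⟨hα, hαβ.trans_lt hβ⟩ ⟨hα.trans_le hαβ, hβ⟩ hαβ)

theorem inv_sqrt_one_sub_sq {α : ℝ} (hα : α ^ 2 < 1) :
    (√(1 - α ^ 2))⁻¹ = √(1 + marginSlope α ^ 2) := by
  have hpos : 0 < 1 - α ^ 2 := sub_pos.2 hα
  rw [marginSlope, ← Real.sqrt_inv, div_pow, Real.sq_sqrt hpos.le]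
  congr 1
  field_simp
  ring

theorem abs_sqrt_one_add_sq_sub_le (x y : ℝ) :
    |√(1 + x ^ 2) - √(1 + y ^ 2)| ≤ |x - y| := by
  have hnorm (z : ℝ) : ‖(1 + z * Complex.I : ℂ)‖ = √(1 + z ^ 2) := by
    simpa using Complex.norm_add_mul_I 1 z
  rw [← hnorm, ← hnorm]
  refine (abs_norm_sub_norm_le _ _).trans_eq ?_
  rw [add_sub_add_left_eq_sub, ← sub_mul, norm_mul, Complex.norm_I, mul_one, ← Complex.ofReal_sub,
    Complex.norm_real, Real.norm_eq_abs]

/-- For `α² < 1`, `h ≠ 0` and a Gaussian vector `g` with independent `N(0, 1/k)` coordinates, the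
event `⟨h, α a + √(1 - α²) g⟩ ≤ γ/2` has probability `Φ` of this number. -/
def marginThreshold (k : ℕ) (γ α : ℝ) (h a : Fin k → ℝ) : ℝ :=
  √k * (γ / 2 - α * (h ⬝ᵥ a)) / (√(1 - α ^ 2) * √(h ⬝ᵥ h))

variable {k : ℕ} {γ α α₁ α₂ : ℝ}

theorem marginThreshold_eq (hα : α ^ 2 < 1) (h a : Fin k → ℝ) :
    marginThreshold k γ α h a =
      √k * (γ / 2 * √(1 + marginSlope α ^ 2) - marginSlope α * (h ⬝ᵥ a)) / √(h ⬝ᵥ h) := by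
  rw [← inv_sqrt_one_sub_sq hα, marginThreshold, marginSlope]
  ring

theorem mul_marginSlope_sub_le_marginThreshold_sub (hα₁ : -1 < α₁) (hα : α₁ ≤ α₂) (hα₂ : α₂ < 1)
    (h a : Fin k → ℝ) :
    √k * (marginSlope α₂ - marginSlope α₁) * ((h ⬝ᵥ a - |γ| / 2) / √(h ⬝ᵥ h)) ≤
      marginThreshold k γ α₁ h a - marginThreshold k γ α₂ h a := by
  have hslope := marginSlope_sub_nonneg hα₁ hα hα₂
  rw [marginThreshold_eq (by nlinarith), marginThreshold_eq (by nlinarith)]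
  set b₁ := marginSlope α₁
  set b₂ := marginSlope α₂
  have hoffset : -(|γ| / 2 * (b₂ - b₁)) ≤ γ / 2 * (√(1 + b₁ ^ 2) - √(1 + b₂ ^ 2)) := by
    refine (abs_le.1 ?_).1
    calc |γ / 2 * (√(1 + b₁ ^ 2) - √(1 + b₂ ^ 2))|
        = |γ| / 2 * |√(1 + b₁ ^ 2) - √(1 + b₂ ^ 2)| := by rw [abs_mul, abs_div, abs_two]
      _ ≤ |γ| / 2 * |b₁ - b₂| :=
          mul_le_mul_of_nonneg_left (abs_sqrt_one_add_sq_sub_le b₁ b₂) (by positivity)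
      _ = |γ| / 2 * (b₂ - b₁) := by rw [abs_sub_comm, abs_of_nonneg hslope]
  calc √k * (b₂ - b₁) * ((h ⬝ᵥ a - |γ| / 2) / √(h ⬝ᵥ h))
      = √k * ((b₂ - b₁) * (h ⬝ᵥ a) + -(|γ| / 2 * (b₂ - b₁))) / √(h ⬝ᵥ h) := by ring
    _ ≤ √k * ((b₂ - b₁) * (h ⬝ᵥ a) + γ / 2 * (√(1 + b₁ ^ 2) - √(1 + b₂ ^ 2))) / √(h ⬝ᵥ h) := by
        gcongr
    _ = _ := by ring

end Threshold

section RoundedThreshold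

variable {k : ℕ} {γ α α₁ α₂ : ℝ}

theorem le_sqrt_gridRound_dotProduct_self (hk : 0 < k) (t a : Fin k → ℝ) :
    1 / 20 ≤ √(gridRound t a ⬝ᵥ gridRound t a) :=
  Real.le_sqrt_of_sq_le (by linarith [le_gridRound_dotProduct_self hk t a])

theorem abs_marginThreshold_gridRound_le (hk : 0 < k) (hγ : |γ| ≤ 1 / 1000)
    (hα : |α| ≤ 1 / 1000) {t a : Fin k → ℝ} (ha : a ⬝ᵥ a ≤ 4) :
    |marginThreshold k γ α (gridRound t a) a| ≤ √k / 10 := by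
  have hN := le_sqrt_gridRound_dotProduct_self hk t a
  have hP : |gridRound t a ⬝ᵥ a| ≤ 17 / 4 := by
    have hQ : 0 ≤ a ⬝ᵥ a := dotProduct_self_star_nonneg a
    have := abs_le.1 (abs_gridRound_dotProduct_sub_le hk t a)
    exact abs_le.2 ⟨by linarith, by linarith⟩
  have hnum : |γ / 2 - α * (gridRound t a ⬝ᵥ a)| ≤ 19 / 4000 := by
    calc |γ / 2 - α * (gridRound t a ⬝ᵥ a)|
        ≤ |γ / 2| + |α * (gridRound t a ⬝ᵥ a)| := abs_sub _ _
      _ = |γ| / 2 + |α| * |gridRound t a ⬝ᵥ a| := by rw [abs_mul, abs_div, abs_two]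
      _ ≤ 1 / 1000 / 2 + 1 / 1000 * (17 / 4) := by gcongr
      _ = 19 / 4000 := by norm_num
  have hcos : 19 / 20 ≤ √(1 - α ^ 2) :=
    Real.le_sqrt_of_sq_le (by nlinarith [abs_le.1 hα])
  rw [marginThreshold, abs_div, abs_mul, abs_of_nonneg (Real.sqrt_nonneg k),
    abs_of_nonneg (by positivity : 0 ≤ √(1 - α ^ 2) * √(gridRound t a ⬝ᵥ gridRound t a))]
  calc √k * |γ / 2 - α * (gridRound t a ⬝ᵥ a)| /
        (√(1 - α ^ 2) * √(gridRound t a ⬝ᵥ gridRound t a))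
      ≤ √k * (19 / 4000) / (19 / 20 * (1 / 20)) := by gcongr
    _ = √k / 10 := by ring

theorem neg_le_cdf_marginThreshold_sub (hk : 0 < k) (hγ : |γ| ≤ 1 / 1000) (hα₁ : -1 < α₁)
    (hα : α₁ ≤ α₂) (hα₂ : α₂ < 1) (t a : Fin k → ℝ) :
    -(2 * √k * (marginSlope α₂ - marginSlope α₁)) ≤
      Φ (marginThreshold k γ α₁ (gridRound t a) a) -
        Φ (marginThreshold k γ α₂ (gridRound t a) a) := by
  have hslope := marginSlope_sub_nonneg hα₁ hα hα₂
  have hN := le_sqrt_gridRound_dotProduct_self hk t a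
  have hratio : -2 ≤ (gridRound t a ⬝ᵥ a - |γ| / 2) / √(gridRound t a ⬝ᵥ gridRound t a) := by
    have hQ : 0 ≤ a ⬝ᵥ a := dotProduct_self_star_nonneg a
    rw [le_div_iff₀ (by linarith)]
    linarith [abs_le.1 (abs_gridRound_dotProduct_sub_le hk t a)]
  refine neg_le_cdf_gaussianReal_sub (by positivity)
    (le_trans ?_ (mul_marginSlope_sub_le_marginThreshold_sub hα₁ hα hα₂ _ a))
  linarith [mul_le_mul_of_nonneg_left hratio (mul_nonneg (Real.sqrt_nonneg k) hslope)]

theorem marginThreshold_gridRound_le (hk : 0 < k) (hγ : |γ| ≤ 1 / 1000) (hα₁ : -1 < α₁)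
    (hα : α₁ ≤ α₂) (hα₂ : α₂ < 1) {t a : Fin k → ℝ} (ha : 1 / 4 < a ⬝ᵥ a) :
    marginThreshold k γ α₂ (gridRound t a) a ≤ marginThreshold k γ α₁ (gridRound t a) a := by
  have hslope := marginSlope_sub_nonneg hα₁ hα hα₂
  have hP : 0 ≤ gridRound t a ⬝ᵥ a - |γ| / 2 := by
    linarith [abs_le.1 (abs_gridRound_dotProduct_sub_le hk t a)]
  refine sub_nonneg.1 (le_trans ?_ (mul_marginSlope_sub_le_marginThreshold_sub hα₁ hα hα₂ _ a))
  positivity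

theorem le_cdf_marginThreshold_sub (hk : 0 < k) (hγ : |γ| ≤ 1 / 1000) (hα₁ : -(1 / 1000) ≤ α₁)
    (hα : α₁ ≤ α₂) (hα₂ : α₂ ≤ 1 / 1000) {t a : Fin k → ℝ} (ha : 1 / 4 < a ⬝ᵥ a)
    (ha' : a ⬝ᵥ a < 4) :
    √k * (marginSlope α₂ - marginSlope α₁) * (Real.exp (-k / 200) / 100) ≤
      Φ (marginThreshold k γ α₁ (gridRound t a) a) -
        Φ (marginThreshold k γ α₂ (gridRound t a) a) := by
  have h₁ : -1 < α₁ := by linarith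
  have h₂ : α₂ < 1 := by linarith
  have hslope := marginSlope_sub_nonneg h₁ hα h₂
  have hN := le_sqrt_gridRound_dotProduct_self hk t a
  have hN' : √(gridRound t a ⬝ᵥ gridRound t a) ≤ 3 :=
    Real.sqrt_le_iff.2 ⟨by norm_num, by linarith [gridRound_dotProduct_self_le hk t a]⟩
  have hratio : 3 / 100 ≤
      (gridRound t a ⬝ᵥ a - |γ| / 2) / √(gridRound t a ⬝ᵥ gridRound t a) := by
    rw [le_div_iff₀ (by linarith)]
    linarith [abs_le.1 (abs_gridRound_dotProduct_sub_le hk t a)]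
  calc √k * (marginSlope α₂ - marginSlope α₁) * (Real.exp (-k / 200) / 100)
      = Real.exp (-(√k / 10) ^ 2 / 2) / 3 *
          (√k * (marginSlope α₂ - marginSlope α₁) * (3 / 100)) := by
        rw [div_pow, Real.sq_sqrt k.cast_nonneg]
        ring_nf
    _ ≤ Real.exp (-(√k / 10) ^ 2 / 2) / 3 *
          (marginThreshold k γ α₁ (gridRound t a) a -
            marginThreshold k γ α₂ (gridRound t a) a) := by
        gcongr
        refine le_trans ?_ (mul_marginSlope_sub_le_marginThreshold_sub h₁ hα h₂ _ a)
        gcongr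
    _ ≤ _ := mul_sub_le_cdf_gaussianReal_sub
        (marginThreshold_gridRound_le hk hγ h₁ hα h₂ ha)
        (abs_marginThreshold_gridRound_le hk hγ (abs_le.2 ⟨by linarith, by linarith⟩) ha'.le)
        (abs_marginThreshold_gridRound_le hk hγ (abs_le.2 ⟨by linarith, by linarith⟩) ha'.le)

end RoundedThreshold

section RoundedMarginCDF

variable {k : ℕ} {γ α : ℝ}

/-- The probability that the rounded margin is at most `γ/2`, as a function of the original
margin `α` alone: given the thresholds `t` and the projected hypothesis `a = Aw`, the rounded
margin is Gaussian. -/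
def roundedMarginCDF (k : ℕ) (γ α : ℝ) : ℝ≥0∞ :=
  ∫⁻ t, ∫⁻ a, ENNReal.ofReal (Φ (marginThreshold k γ α (gridRound t a) a))
    ∂(Measure.pi fun _ : Fin k => gaussianReal 0 (k : ℝ≥0)⁻¹)
    ∂(Measure.pi fun _ : Fin k => volume.restrict (Set.Icc (0 : ℝ) 1))

theorem integrable_cdf_marginThreshold (t : Fin k → ℝ) (μ : Measure (Fin k → ℝ))
    [IsFiniteMeasure μ] :
    Integrable (fun a => Φ (marginThreshold k γ α (gridRound t a) a)) μ := by
  have hround : Measurable fun a : Fin k → ℝ => gridRound t a :=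
    measurable_gridRound.comp measurable_prodMk_left
  have hthreshold : Measurable fun a => marginThreshold k γ α (gridRound t a) a := by
    unfold marginThreshold
    fun_prop
  refine Integrable.of_bound (C := 1)
    ((monotone_cdf _).measurable.comp hthreshold).aestronglyMeasurable (ae_of_all _ fun a => ?_)
  rw [Real.norm_of_nonneg (cdf_nonneg _ _)]
  exact cdf_le_one _ _

theorem integral_cdf_marginThreshold_le (hk : 50 ≤ k) (hγ : |γ| ≤ 1 / 1000) {α₁ α₂ : ℝ}
    (hα₁ : -(1 / 1000) ≤ α₁) (hα : α₁ ≤ α₂) (hα₂ : α₂ ≤ 1 / 1000) (t : Fin k → ℝ) :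
    ∫ a, Φ (marginThreshold k γ α₂ (gridRound t a) a)
        ∂(Measure.pi fun _ : Fin k => gaussianReal 0 (k : ℝ≥0)⁻¹) ≤
      ∫ a, Φ (marginThreshold k γ α₁ (gridRound t a) a)
        ∂(Measure.pi fun _ : Fin k => gaussianReal 0 (k : ℝ≥0)⁻¹) := by
  have hk₀ : 0 < k := by omega
  have h₁ : -1 < α₁ := by linarith
  have h₂ : α₂ < 1 := by linarith
  have hslope := marginSlope_sub_nonneg h₁ hα h₂
  have hsq : Measurable fun a : Fin k → ℝ => a ⬝ᵥ a := by fun_prop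
  set μ := Measure.pi fun _ : Fin k => gaussianReal 0 (k : ℝ≥0)⁻¹
  have hgain := mul_measureReal_sub_mul_measureReal_le_integral
    ((integrable_cdf_marginThreshold t μ).sub (integrable_cdf_marginThreshold t μ))
    (hsq measurableSet_Iic) (hsq measurableSet_Ioo)
    (Disjoint.preimage _ (Set.disjoint_left.2 fun _ hs ht => not_lt_of_ge hs ht.1))
    (fun a _ => neg_le_cdf_marginThreshold_sub hk₀ hγ h₁ hα h₂ t a)
    (fun a ha => le_cdf_marginThreshold_sub hk₀ hγ hα₁ hα hα₂ ha.1 ha.2)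
    (fun a ha => sub_nonneg.2 (monotone_cdf _
      (marginThreshold_gridRound_le hk₀ hγ h₁ hα h₂ (not_le.1 ha))))
  simp only [Pi.sub_apply] at hgain
  rw [integral_sub (integrable_cdf_marginThreshold t _) (integrable_cdf_marginThreshold t _)]
    at hgain
  refine sub_nonneg.1 (le_trans ?_ hgain)
  have hball : μ.real ((fun a => a ⬝ᵥ a) ⁻¹' Set.Iic (1 / 4)) ≤ (3 / 4) ^ k :=
    measureReal_dotProduct_self_le_one_quarter_le_pow hk₀
  have hshell : 1 / 2 ≤ μ.real ((fun a => a ⬝ᵥ a) ⁻¹' Set.Ioo (1 / 4) 4) :=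
    half_le_measureReal_shell hk
  calc 0 ≤ √k * (marginSlope α₂ - marginSlope α₁) *
          (Real.exp (-k / 200) / 100 * (1 / 2) - 2 * (3 / 4) ^ k) :=
        mul_nonneg (by positivity) (by linarith [four_mul_three_quarters_pow_le_exp hk])
    _ = √k * (marginSlope α₂ - marginSlope α₁) * (Real.exp (-k / 200) / 100) * (1 / 2) -
          2 * √k * (marginSlope α₂ - marginSlope α₁) * (3 / 4) ^ k := by ring
    _ ≤ _ := by gcongr

theorem antitoneOn_roundedMarginCDF (hk : 50 ≤ k) (hγ : |γ| ≤ 1 / 1000) :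
    AntitoneOn (roundedMarginCDF k γ) (Set.Icc (-(1 / 1000)) (1 / 1000)) := by
  intro α₁ hα₁ α₂ hα₂ hα
  refine lintegral_mono fun t => ?_
  rw [← ofReal_integral_eq_lintegral_ofReal (integrable_cdf_marginThreshold t _)
      (ae_of_all _ fun _ => cdf_nonneg _ _),
    ← ofReal_integral_eq_lintegral_ofReal (integrable_cdf_marginThreshold t _)
      (ae_of_all _ fun _ => cdf_nonneg _ _)]
  exact ENNReal.ofReal_le_ofReal (integral_cdf_marginThreshold_le hk hγ hα₁.1 hα hα₂.2 t)

end RoundedMarginCDF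

section MarginDistribution

variable {k m : ℕ} {γ α : ℝ}

theorem matVec_add (A : Fin k → Fin m → ℝ) (x y : Fin m → ℝ) :
    matVec A (x + y) = matVec A x + matVec A y :=
  Matrix.mulVec_add A x y

theorem matVec_smul (A : Fin k → Fin m → ℝ) (c : ℝ) (x : Fin m → ℝ) :
    matVec A (c • x) = c • matVec A x :=
  Matrix.mulVec_smul A c x

theorem exists_orthonormal_decomposition {ι : Type*} [Fintype ι] {w x : ι → ℝ}
    (hw : w ⬝ᵥ w = 1) (hx : x ⬝ᵥ x = 1) (hwx : (w ⬝ᵥ x) ^ 2 < 1) :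
    ∃ z, z ⬝ᵥ z = 1 ∧ w ⬝ᵥ z = 0 ∧ x = (w ⬝ᵥ x) • w + √(1 - (w ⬝ᵥ x) ^ 2) • z := by
  have hpos : 0 < 1 - (w ⬝ᵥ x) ^ 2 := sub_pos.2 hwx
  have hβ : √(1 - (w ⬝ᵥ x) ^ 2) ≠ 0 := (Real.sqrt_pos.2 hpos).ne'
  refine ⟨(√(1 - (w ⬝ᵥ x) ^ 2))⁻¹ • (x - (w ⬝ᵥ x) • w), ?_, ?_, ?_⟩
  · simp only [smul_dotProduct, dotProduct_smul, sub_dotProduct, dotProduct_sub, smul_eq_mul, hw,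
      hx, dotProduct_comm x w]
    field_simp
    rw [Real.sq_sqrt hpos.le]
    ring
  · simp only [dotProduct_smul, dotProduct_sub, hw, smul_eq_mul, mul_one, sub_self, mul_zero]
  · rw [smul_inv_smul₀ hβ, add_sub_cancel]

theorem pi_gaussianReal_dotProduct_le_eq_cdf (hk : 0 < k) (hα : α ^ 2 < 1) {h : Fin k → ℝ}
    (hh : 0 < h ⬝ᵥ h) (a : Fin k → ℝ) :
    (Measure.pi fun _ : Fin k => gaussianReal 0 (k : ℝ≥0)⁻¹)
        {g | h ⬝ᵥ (α • a + √(1 - α ^ 2) • g) ≤ γ / 2} =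
      ENNReal.ofReal (Φ (marginThreshold k γ α h a)) := by
  have hβ : 0 < √(1 - α ^ 2) := Real.sqrt_pos.2 (sub_pos.2 hα)
  have hevent : {g | h ⬝ᵥ (α • a + √(1 - α ^ 2) • g) ≤ γ / 2} =
      (fun g => h ⬝ᵥ g) ⁻¹' Set.Iic ((γ / 2 - α * (h ⬝ᵥ a)) / √(1 - α ^ 2)) := by
    ext g
    simp only [Set.mem_ofPred_eq, Set.mem_preimage, Set.mem_Iic, dotProduct_add, dotProduct_smul,
      smul_eq_mul, le_div_iff₀' hβ, le_sub_iff_add_le']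
  have hvar : (k : ℝ≥0)⁻¹ * (h ⬝ᵥ h).toNNReal ≠ 0 := by positivity
  rw [hevent, ← Measure.map_apply (by fun_prop) measurableSet_Iic, map_dotProduct_pi_gaussianReal,
    gaussianReal_Iic_eq_cdf hvar, NNReal.coe_mul, NNReal.coe_inv, NNReal.coe_natCast,
    Real.coe_toNNReal _ hh.le, Real.sqrt_mul (by positivity), Real.sqrt_inv, marginThreshold]
  congr 2
  field_simp

theorem roundMeasure_hRound_dotProduct_le_eq_roundedMarginCDF (hk : 0 < k) {w x : Fin m → ℝ}
    (hw : w ⬝ᵥ w = 1) (hx : x ⬝ᵥ x = 1) (hwx : (w ⬝ᵥ x) ^ 2 < 1) :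
    roundMeasure k m {p | hRound p.1 p.2 w ⬝ᵥ matVec p.1 x ≤ γ / 2} =
      roundedMarginCDF k γ (w ⬝ᵥ x) := by
  obtain ⟨z, hz, hwz, hxz⟩ := exists_orthonormal_decomposition hw hx hwx
  set α := w ⬝ᵥ x
  set S : Set (((Fin k → ℝ) × (Fin k → ℝ)) × (Fin k → ℝ)) :=
    {q | gridRound q.2 q.1.1 ⬝ᵥ (α • q.1.1 + √(1 - α ^ 2) • q.1.2) ≤ γ / 2}
  have hS : MeasurableSet S := by
    have hround : Measurable fun q : ((Fin k → ℝ) × (Fin k → ℝ)) × (Fin k → ℝ) =>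
        gridRound q.2 q.1.1 := measurable_gridRound.comp (measurable_snd.prodMk measurable_fst.fst)
    exact measurableSet_le (by fun_prop) measurable_const
  have hproj : Measurable fun A : Fin k → Fin m → ℝ => (matVec A w, matVec A z) := by
    unfold matVec
    fun_prop
  have hmatVec (A : Fin k → Fin m → ℝ) :
      matVec A x = α • matVec A w + √(1 - α ^ 2) • matVec A z := by
    rw [← matVec_smul, ← matVec_smul, ← matVec_add, ← hxz]
  have hevent : {p : (Fin k → Fin m → ℝ) × (Fin k → ℝ) |
      hRound p.1 p.2 w ⬝ᵥ matVec p.1 x ≤ γ / 2} =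
        Prod.map (fun A => (matVec A w, matVec A z)) id ⁻¹' S := by
    simp only [hmatVec]
    rfl
  rw [hevent, ← Measure.map_apply (hproj.prodMap measurable_id) hS, roundMeasure,
    ← Measure.map_prod_map _ _ hproj measurable_id, Measure.map_id,
    map_matVec_matVec_pi_gaussianReal _ k hw hz hwz, Measure.prod_apply_symm hS, roundedMarginCDF]
  refine lintegral_congr fun t => ?_
  rw [Measure.prod_apply (measurable_prodMk_right hS)]
  refine lintegral_congr fun a => ?_
  exact pi_gaussianReal_dotProduct_le_eq_cdf hk hwx
    (by linarith [le_gridRound_dotProduct_self hk t a]) a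

theorem roundMeasure_mul_sum_le_eq_roundedMarginCDF (hk : 0 < k) {w x : Fin m → ℝ} {y : ℝ}
    (hw : ∑ j, w j ^ 2 = 1) (hx : ∑ j, x j ^ 2 = 1) (hy : y = 1 ∨ y = -1)
    (hwx : (y * dotp w x) ^ 2 < 1) :
    roundMeasure k m {p | y * ∑ r, hRound p.1 p.2 w r * ∑ s, p.1 r s * x s ≤ γ / 2} =
      roundedMarginCDF k γ (y * dotp w x) := by
  have hdot : w ⬝ᵥ (y • x) = y * dotp w x := dotProduct_smul y w x
  have hunit : (y • x) ⬝ᵥ (y • x) = 1 := by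
    rw [smul_dotProduct, dotProduct_smul, smul_smul]
    rcases hy with rfl | rfl <;> simpa [dotProduct, sq] using hx
  have hmargin (p : (Fin k → Fin m → ℝ) × (Fin k → ℝ)) :
      y * ∑ r, hRound p.1 p.2 w r * ∑ s, p.1 r s * x s =
        hRound p.1 p.2 w ⬝ᵥ matVec p.1 (y • x) := by
    rw [matVec_smul, dotProduct_smul]
    rfl
  simp only [hmargin, ← hdot]
  exact roundMeasure_hRound_dotProduct_le_eq_roundedMarginCDF hk
    (by simpa [dotProduct, sq] using hw) hunit (by rwa [hdot])

end MarginDistribution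

theorem statement15_general {m₁ m₂ k : ℕ} (hk : 50 ≤ k) {γ : ℝ} (hγ : |γ| ≤ 1 / 1000)
    {w₁ x₁ : Fin m₁ → ℝ} {w₂ x₂ : Fin m₂ → ℝ} {y₁ y₂ : ℝ}
    (hw₁ : ∑ j, w₁ j ^ 2 = 1) (hx₁ : ∑ j, x₁ j ^ 2 = 1)
    (hw₂ : ∑ j, w₂ j ^ 2 = 1) (hx₂ : ∑ j, x₂ j ^ 2 = 1)
    (hy₁ : y₁ = 1 ∨ y₁ = -1) (hy₂ : y₂ = 1 ∨ y₂ = -1)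
    (hlow : -(1 / 1000) ≤ y₁ * dotp w₁ x₁) (hle : y₁ * dotp w₁ x₁ ≤ y₂ * dotp w₂ x₂)
    (hhigh : y₂ * dotp w₂ x₂ ≤ 1 / 1000) :
    roundMeasure k m₂ {p | y₂ * ∑ r, hRound p.1 p.2 w₂ r * ∑ s, p.1 r s * x₂ s ≤ γ / 2} ≤
      roundMeasure k m₁ {p | y₁ * ∑ r, hRound p.1 p.2 w₁ r * ∑ s, p.1 r s * x₁ s ≤ γ / 2} := by
  have hk₀ : 0 < k := by omega
  rw [roundMeasure_mul_sum_le_eq_roundedMarginCDF hk₀ hw₂ hx₂ hy₂ (by nlinarith),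
    roundMeasure_mul_sum_le_eq_roundedMarginCDF hk₀ hw₁ hx₁ hy₁ (by nlinarith)]
  exact antitoneOn_roundedMarginCDF hk hγ ⟨hlow, hle.trans hhigh⟩ ⟨hlow.trans hle, hhigh⟩ hle

/-- (Claim A.4 of the paper.) Anti-monotonicity of the probability that
the rounded margin is at most `γ_i/2`, as a function of the original margin in
`(0, γ_i]`. -/
theorem statement15 : ∃ cγ : ℝ, 0 < cγ ∧ ∃ k₀ : ℕ, ∀ (m k : ℕ), k₀ ≤ k →
    ∀ γi : ℝ, 0 < γi → γi ≤ cγ →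
    ∀ (w₁ x₁ w₂ x₂ : Fin m → ℝ) (y₁ y₂ : ℝ),
    (∑ j, w₁ j ^ 2) = 1 → (∑ j, x₁ j ^ 2) = 1 →
    (∑ j, w₂ j ^ 2) = 1 → (∑ j, x₂ j ^ 2) = 1 →
    (y₁ = 1 ∨ y₁ = -1) → (y₂ = 1 ∨ y₂ = -1) →
    0 < y₁ * dotp w₁ x₁ → y₁ * dotp w₁ x₁ ≤ y₂ * dotp w₂ x₂ →
    y₂ * dotp w₂ x₂ ≤ γi →
    roundMeasure k m
        {p | y₂ * ∑ r, hRound p.1 p.2 w₂ r * ∑ s, p.1 r s * x₂ s ≤ γi / 2} ≤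
      roundMeasure k m
        {p | y₁ * ∑ r, hRound p.1 p.2 w₁ r * ∑ s, p.1 r s * x₁ s ≤ γi / 2} := by
  refine ⟨1 / 1000, by norm_num, 50, ?_⟩
  intro m k hk γ hγ hγ' w₁ x₁ w₂ x₂ y₁ y₂ hw₁ hx₁ hw₂ hx₂ hy₁ hy₂ hpos hle hhigh
  exact statement15_general hk (abs_le.2 ⟨by linarith, hγ'⟩) hw₁ hx₁ hw₂ hx₂ hy₁ hy₂
    (by linarith) hle (hhigh.trans hγ')
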